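/- 𝔰_{1/2}^∞ ≤ 𝔣𝔰_g ≤ 𝔣𝔰: the least cardinality of a cofinally bisecting family is at most the least cardinality of a family of infinite subsets of ℕ splitting all good block sequences, which in turn is at most the least cardinality of a family splitting all block sequences. -/

import Mathlib

open Filter Set

/-- `cnt X n` is the number of elements of `X` below `n`, i.e. `|X ∩ {0,…,n−1}|`. -/
noncomputable def cnt (X : Set ℕ) (n : ℕ) : ℕ := Nat.card ↥(X ∩ Set.Iio n)

/-- `S` cofinally bisects `X`: for infinitely many `n`,
`|S ∩ X ∩ {0,…,n−1}| / |X ∩ {0,…,n−1}| = 1/2`. -/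
def CofBisects (S X : Set ℕ) : Prop :=
  {n : ℕ | (cnt (S ∩ X) n : ℝ) / (cnt X n : ℝ) = 1 / 2}.Infinite

/-- A block sequence: a sequence of nonempty finite subsets of `ℕ` with
`max (A n) < min (A (n+1))` for all `n`. -/
def IsBlockSeq (A : ℕ → Finset ℕ) : Prop :=
  (∀ n, (A n).Nonempty) ∧ ∀ n, ∀ x ∈ A n, ∀ y ∈ A (n + 1), x < y

/-- A good block sequence: a block sequence whose sequence of block sizes is
given by a computable function. -/
def IsGoodBlockSeq (A : ℕ → Finset ℕ) : Prop :=
  IsBlockSeq A ∧ ∃ f : ℕ → ℕ, Computable f ∧ ∀ n, (A n).card = f n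

/-- `B` splits a block sequence `A`: both `{n : A n ⊆ B}` and
`{n : A n ∩ B = ∅}` are infinite. -/
def SplitsBlocks (B : Set ℕ) (A : ℕ → Finset ℕ) : Prop :=
  {n : ℕ | ∀ x ∈ A n, x ∈ B}.Infinite ∧ {n : ℕ | ∀ x ∈ A n, x ∉ B}.Infinite

/-- `𝔰_{1/2}^∞`: the least cardinality of a cofinally bisecting family. -/
noncomputable def sHalfInf : Cardinal :=
  sInf {c : Cardinal | ∃ 𝒮 : Set (Set ℕ), (∀ S ∈ 𝒮, S.Infinite) ∧
    (∀ X : Set ℕ, X.Infinite → ∃ S ∈ 𝒮, CofBisects S X) ∧ c = Cardinal.mk 𝒮}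

/-- `𝔣𝔰`: the least cardinality of a family of infinite subsets of `ℕ`
splitting every block sequence. -/
noncomputable def fs : Cardinal :=
  sInf {c : Cardinal | ∃ ℱ : Set (Set ℕ), (∀ F ∈ ℱ, F.Infinite) ∧
    (∀ A : ℕ → Finset ℕ, IsBlockSeq A → ∃ B ∈ ℱ, SplitsBlocks B A) ∧ c = Cardinal.mk ℱ}

/-- `𝔣𝔰_g`: the least cardinality of a family of infinite subsets of `ℕ`
splitting every good block sequence. -/
noncomputable def fsg : Cardinal :=
  sInf {c : Cardinal | ∃ ℱ : Set (Set ℕ), (∀ F ∈ ℱ, F.Infinite) ∧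
    (∀ A : ℕ → Finset ℕ, IsGoodBlockSeq A → ∃ B ∈ ℱ, SplitsBlocks B A) ∧ c = Cardinal.mk ℱ}

/-!
The discrepancy `2 |S ∩ X ∩ n| - |X ∩ n|` moves by at most one when `n` increases by one, so it
cannot change sign without vanishing; hence `S` cofinally bisects `X` as soon as the discrepancy is
infinitely often nonnegative and infinitely often nonpositive. Take consecutive blocks of `X` of
sizes `1, 2, 4, …`, each making up half of the initial segment of `X` that it ends. A block inside
`S` makes the discrepancy nonnegative at its end, and a block disjoint from `S` makes it nonpositive
there. The block sizes are computable, so a family splitting all good block sequences is cofinally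
bisecting.
-/

theorem frequently_eq_zero_of_le_succ_add_one {d : ℕ → ℤ} (step : ∀ n, d n ≤ d (n + 1) + 1)
    (nonneg : ∃ᶠ n in atTop, 0 ≤ d n) (nonpos : ∃ᶠ n in atTop, d n ≤ 0) :
    ∃ᶠ n in atTop, d n = 0 := by
  intro ne_zero
  obtain ⟨N, ne_zero⟩ := eventually_atTop.1 ne_zero
  obtain ⟨k, hNk, hk⟩ := frequently_atTop.1 nonneg N
  have pos_of_ge : ∀ n ≥ k, 0 < d n := by
    intro n hkn
    induction n, hkn using Nat.le_induction with
    | base => exact hk.lt_of_ne' (ne_zero k hNk)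
    | succ n hkn ih =>
      have := step n
      have := ne_zero (n + 1) (by lia)
      lia
  obtain ⟨n, hkn, hn⟩ := frequently_atTop.1 nonpos k
  exact hn.not_gt (pos_of_ge n hkn)

theorem computable_pow (b : ℕ) : Computable fun n : ℕ => b ^ n :=
  ((Primrec₂.unpaired'.1 Nat.Primrec.pow).comp (Primrec.const b) Primrec.id).to_comp

section Counting

variable {S X : Set ℕ} {n : ℕ}

theorem cnt_eq_ncard (X : Set ℕ) (n : ℕ) : cnt X n = (X ∩ Iio n).ncard :=
  Nat.card_coe_set_eq _

theorem cnt_eq_count (X : Set ℕ) [DecidablePred (· ∈ X)] (n : ℕ) :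
    cnt X n = Nat.count (· ∈ X) n := by
  rw [cnt_eq_ncard, Nat.count_eq_card_filter_range, ← ncard_coe_finset]
  congr 1
  ext x
  simp [and_comm]

theorem cnt_mono (X : Set ℕ) : Monotone (cnt X) := by
  classical
  simpa only [funext (cnt_eq_count X)] using Nat.count_monotone (· ∈ X)

theorem cnt_succ_le (X : Set ℕ) (n : ℕ) : cnt X (n + 1) ≤ cnt X n + 1 := by
  classical
  rw [cnt_eq_count, cnt_eq_count, Nat.count_succ]
  split_ifs <;> lia

theorem cnt_nth (hX : X.Infinite) (k : ℕ) : cnt X (Nat.nth (· ∈ X) k) = k := by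
  classical
  exact (cnt_eq_count X _).trans (Nat.count_nth_of_infinite (p := (· ∈ X)) hX k)

theorem cnt_pos_of_mem_of_lt {x : ℕ} (hx : x ∈ X) (hxn : x < n) : 0 < cnt X n := by
  rw [cnt_eq_ncard, ncard_pos ((finite_Iio n).inter_of_right X)]
  exact ⟨x, hx, hxn⟩

theorem card_le_cnt {A : Finset ℕ} (hAX : ↑A ⊆ X) (hAn : ∀ x ∈ A, x < n) : A.card ≤ cnt X n := by
  rw [cnt_eq_ncard, ← ncard_coe_finset]
  exact ncard_le_ncard (subset_inter hAX hAn) ((finite_Iio n).inter_of_right X)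

theorem cnt_inter_add_cnt_sdiff (S X : Set ℕ) (n : ℕ) :
    cnt (S ∩ X) n + cnt (X \ S) n = cnt X n := by
  simp only [cnt_eq_ncard]
  rw [inter_comm S X, inter_right_comm, sdiff_inter_right_comm]
  exact ncard_inter_add_ncard_sdiff_eq_ncard _ _ ((finite_Iio n).inter_of_right X)

theorem cofBisects_iff_frequently_two_mul_cnt_eq (hX : X.Nonempty) :
    CofBisects S X ↔ ∃ᶠ n in atTop, 2 * cnt (S ∩ X) n = cnt X n := by
  obtain ⟨x, hx⟩ := hX
  rw [CofBisects, ← Nat.frequently_atTop_iff_infinite]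
  refine frequently_congr ((eventually_gt_atTop x).mono fun n hxn => ?_)
  have cnt_ne_zero : (cnt X n : ℝ) ≠ 0 := by exact_mod_cast (cnt_pos_of_mem_of_lt hx hxn).ne'
  rw [div_eq_div_iff cnt_ne_zero two_ne_zero, one_mul, mul_comm]
  norm_cast

theorem cofBisects_of_frequently_le (hX : X.Nonempty)
    (le_double : ∃ᶠ n in atTop, cnt X n ≤ 2 * cnt (S ∩ X) n)
    (double_le : ∃ᶠ n in atTop, 2 * cnt (S ∩ X) n ≤ cnt X n) : CofBisects S X := by
  rw [cofBisects_iff_frequently_two_mul_cnt_eq hX]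
  have discrepancy_eq_zero : ∃ᶠ n in atTop, (2 * cnt (S ∩ X) n - cnt X n : ℤ) = 0 := by
    refine frequently_eq_zero_of_le_succ_add_one (fun n => ?_)
      (le_double.mono fun n hn => by lia) (double_le.mono fun n hn => by lia)
    have := cnt_mono (S ∩ X) n.le_succ
    have := cnt_succ_le X n
    lia
  exact discrepancy_eq_zero.mono fun n hn => by lia

end Counting

theorem SplitsBlocks.cofBisects {B X : Set ℕ} {A : ℕ → Finset ℕ} {m : ℕ → ℕ}
    (hB : SplitsBlocks B A) (hX : X.Nonempty) (hAX : ∀ n, ↑(A n) ⊆ X)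
    (hAm : ∀ n, ∀ x ∈ A n, x < m n) (hm : Tendsto m atTop atTop)
    (hcard : ∀ n, cnt X (m n) ≤ 2 * (A n).card) : CofBisects B X := by
  obtain ⟨infinite_subset, infinite_disjoint⟩ := hB
  rw [← Nat.frequently_atTop_iff_infinite] at infinite_subset infinite_disjoint
  refine cofBisects_of_frequently_le hX (hm.frequently (infinite_subset.mono fun n hn => ?_))
    (hm.frequently (infinite_disjoint.mono fun n hn => ?_))
  · have card_le : (A n).card ≤ cnt (B ∩ X) (m n) :=
      card_le_cnt (subset_inter hn (hAX n)) (hAm n)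
    have := hcard n
    lia
  · have card_le : (A n).card ≤ cnt (X \ B) (m n) :=
      card_le_cnt (fun x hx => ⟨hAX n hx, hn x hx⟩) (hAm n)
    have := hcard n
    have := cnt_inter_add_cnt_sdiff B X (m n)
    lia

section DyadicBlocks

variable {X : Set ℕ}

/-- The dyadic blocks of `X`: block `n` consists of the elements of `X` whose index in the
increasing enumeration of `X` lies in `[2 ^ n, 2 ^ (n + 1))`. The least element of `X`, of index
`0`, belongs to no block. For finite `X` these are junk, as `Nat.nth` is then eventually `0`. -/
noncomputable def dyadicBlock (X : Set ℕ) (n : ℕ) : Finset ℕ :=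
  (Finset.Ico (2 ^ n) (2 ^ (n + 1))).image (Nat.nth (· ∈ X))

theorem dyadicBlock_subset (hX : X.Infinite) (n : ℕ) : ↑(dyadicBlock X n) ⊆ X := by
  intro x hx
  obtain ⟨k, -, rfl⟩ := Finset.mem_image.1 hx
  exact Nat.nth_mem_of_infinite hX k

theorem card_dyadicBlock (hX : X.Infinite) (n : ℕ) : (dyadicBlock X n).card = 2 ^ n := by
  have nth_injective : (Nat.nth (· ∈ X)).Injective := Nat.nth_injective hX
  rw [dyadicBlock, Finset.card_image_of_injective _ nth_injective, Nat.card_Ico, pow_succ]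
  lia

theorem lt_nth_of_mem_dyadicBlock (hX : X.Infinite) {n x : ℕ} (hx : x ∈ dyadicBlock X n) :
    x < Nat.nth (· ∈ X) (2 ^ (n + 1)) := by
  obtain ⟨k, hk, rfl⟩ := Finset.mem_image.1 hx
  exact Nat.nth_strictMono hX (Finset.mem_Ico.1 hk).2

theorem nth_le_of_mem_dyadicBlock (hX : X.Infinite) {n x : ℕ} (hx : x ∈ dyadicBlock X n) :
    Nat.nth (· ∈ X) (2 ^ n) ≤ x := by
  obtain ⟨k, hk, rfl⟩ := Finset.mem_image.1 hx
  exact Nat.nth_monotone hX (Finset.mem_Ico.1 hk).1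

theorem isGoodBlockSeq_dyadicBlock (hX : X.Infinite) : IsGoodBlockSeq (dyadicBlock X) := by
  refine ⟨⟨fun n => ?_, fun n x hx y hy => ?_⟩, (2 ^ ·), computable_pow 2, card_dyadicBlock hX⟩
  · rw [← Finset.card_pos, card_dyadicBlock hX]
    positivity
  · exact (lt_nth_of_mem_dyadicBlock hX hx).trans_le (nth_le_of_mem_dyadicBlock hX hy)

theorem SplitsBlocks.cofBisects_of_dyadicBlock {B : Set ℕ} (hX : X.Infinite)
    (hB : SplitsBlocks B (dyadicBlock X)) : CofBisects B X := by
  refine hB.cofBisects (m := fun n => Nat.nth (· ∈ X) (2 ^ (n + 1))) hX.nonempty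
    (dyadicBlock_subset hX) (fun n x => lt_nth_of_mem_dyadicBlock hX) ?_ fun n => ?_
  · exact ((Nat.nth_strictMono hX).comp
      ((pow_right_strictMono₀ one_lt_two).comp (strictMono_id.add_const 1))).tendsto_atTop
  · rw [cnt_nth hX, card_dyadicBlock hX, pow_succ']

end DyadicBlocks

namespace IsBlockSeq

variable {A : ℕ → Finset ℕ}

theorem lt_of_lt (hA : IsBlockSeq A) {i j : ℕ} (hij : i < j) {x y : ℕ} (hx : x ∈ A i)
    (hy : y ∈ A j) : x < y := by
  induction j, hij using Nat.le_induction generalizing y with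
  | base => exact hA.2 i x hx y hy
  | succ j _ ih =>
    obtain ⟨z, hz⟩ := hA.1 j
    exact (ih hz).trans (hA.2 j z hz y hy)

theorem pairwise_disjoint (hA : IsBlockSeq A) : Pairwise (Function.onFun Disjoint A) :=
  (pairwise_disjoint_on A).2 fun _ _ hij =>
    Finset.disjoint_left.2 fun _ hi hj => (hA.lt_of_lt hij hi hj).false

theorem infinite_of_splitsBlocks (hA : IsBlockSeq A) {B : Set ℕ} (hB : SplitsBlocks B A) :
    B.Infinite := by
  choose a ha using hA.1
  have a_strictMono : StrictMono a :=
    strictMono_nat_of_lt_succ fun n => hA.2 n _ (ha n) _ (ha (n + 1))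
  refine (hB.1.image a_strictMono.injective.injOn).mono ?_
  rintro _ ⟨n, hn, rfl⟩
  exact hn (a n) (ha n)

theorem splitsBlocks_biUnion (hA : IsBlockSeq A) {I : Set ℕ} (hI : I.Infinite)
    (hIc : Iᶜ.Infinite) : SplitsBlocks (⋃ i ∈ I, A i) A := by
  refine ⟨hI.mono fun n hn x hx => mem_biUnion hn hx, hIc.mono fun n hn x hx hxI => ?_⟩
  obtain ⟨i, hi, hxi⟩ := mem_iUnion₂.1 hxI
  have i_ne_n : i ≠ n := fun h => hn (h ▸ hi)
  exact Finset.disjoint_left.1 (hA.pairwise_disjoint i_ne_n) hxi hx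

theorem exists_infinite_splitsBlocks (hA : IsBlockSeq A) :
    ∃ B : Set ℕ, B.Infinite ∧ SplitsBlocks B A := by
  have even_infinite : {n : ℕ | Even n}.Infinite :=
    Nat.frequently_atTop_iff_infinite.1 Nat.frequently_even
  have odd_infinite : {n : ℕ | Even n}ᶜ.Infinite := by
    simpa only [compl_ofPred, Nat.not_even_iff_odd] using
      Nat.frequently_atTop_iff_infinite.1 Nat.frequently_odd
  have splits := hA.splitsBlocks_biUnion even_infinite odd_infinite
  exact ⟨_, hA.infinite_of_splitsBlocks splits, splits⟩

end IsBlockSeq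

/-- `𝔰_{1/2}^∞ ≤ 𝔣𝔰_g ≤ 𝔣𝔰`. -/
theorem sHalfInf_le_fsg_le_fs : sHalfInf ≤ fsg ∧ fsg ≤ fs := by
  -- Splitting families must be exhibited because `sInf ∅ = 0` in `Cardinal`.
  constructor
  · refine csInf_le_csInf' ⟨_, {B | B.Infinite}, fun _ => id,
      fun A hA => hA.1.exists_infinite_splitsBlocks, rfl⟩ ?_
    rintro _ ⟨ℱ, infinite, splits, rfl⟩
    refine ⟨ℱ, infinite, fun X hX => ?_, rfl⟩
    obtain ⟨B, hBℱ, hB⟩ := splits _ (isGoodBlockSeq_dyadicBlock hX)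
    exact ⟨B, hBℱ, hB.cofBisects_of_dyadicBlock hX⟩
  · refine csInf_le_csInf' ⟨_, {B | B.Infinite}, fun _ => id,
      fun A hA => hA.exists_infinite_splitsBlocks, rfl⟩ ?_
    rintro _ ⟨ℱ, infinite, splits, rfl⟩
    exact ⟨ℱ, infinite, fun A hA => splits A hA.1, rfl⟩
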